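/- Let f be a strictly convex standard self-concordant function on ℝⁿ, x a point with Newton decrement λ(x) < 1, H := ∇²f(x), P an n×N matrix of full column rank, H_r := Pᵀ H P, and Q the coarse truncated approximation of H_r with parameter p. Let λ̂ := (∇f(x)ᵀ P Q⁻¹ Pᵀ ∇f(x))^{1/2}, d̂ := −P Q⁻¹ Pᵀ ∇f(x), and x⁺ := x + d̂ (unit step). Then λ(x⁺) ≤ [√(λ(x)² − λ̂²) + λ(x)²] / (1 − λ(x))². -/

import Mathlib

open Matrix

/-!
Write `‖v‖ₓ` for the norm of `∇²f(x)`. Self-concordance bounds `D³f(x)` on the diagonal, and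
M. Riesz's interpolation formula for trigonometric cubics upgrades this, without loss of constant,
to the mixed bound `|D³f(x)[u, v, v]| ≤ 2 ‖u‖ₓ ‖v‖ₓ²`. Integrating along the segment from `x` to
`x + d`, with `r = ‖d‖ₓ < 1`, gives `(1 - r)² ∇²f(x) ≤ ∇²f(x + d) ≤ (1 - r)⁻² ∇²f(x)` and a Taylor
bound for the gradient; if `∇²f(x) k = ∇f(x)`, these combine to
`λ(x + d) ≤ ‖k + d‖ₓ / (1 - r) + (r / (1 - r))²`.

Truncation only raises eigenvalues, so `Q ≥ Pᵀ ∇²f(x) P`, and hence the coarse step satisfies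
`‖d‖ₓ² ≤ λ̂² = -∇f(x) ⬝ d`. Expanding the square, `0 ≤ ‖k + d‖ₓ² ≤ λ(x)² - λ̂²`, and in particular
`r ≤ λ̂ ≤ λ(x)`.
-/

section TrigonometricCubic

open Real

/-- The restriction to the unit circle of the binary cubic form with coefficients `a, 3b, 3c, d`; it
encodes a symmetric trilinear form on the span of two vectors. -/
noncomputable def trigCubic (a b c d t : ℝ) : ℝ :=
  a * cos t ^ 3 + 3 * b * cos t ^ 2 * sin t + 3 * c * cos t * sin t ^ 2 + d * sin t ^ 3

/-- The weights of M. Riesz's interpolation formula for trigonometric polynomials of degree three.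
They are squares of a Dirichlet kernel, whence nonnegative. -/
noncomputable def rieszWeight (t : ℝ) : ℝ :=
  ((1 + 2 * cos (2 * t)) / 3) ^ 2

theorem rieszWeight_nonneg (t : ℝ) : 0 ≤ rieszWeight t :=
  sq_nonneg _

theorem cos_add_pi_div_three (t : ℝ) : cos (t + π / 3) = (cos t - √3 * sin t) / 2 := by
  rw [cos_add, cos_pi_div_three, sin_pi_div_three]
  ring

theorem sin_add_pi_div_three (t : ℝ) : sin (t + π / 3) = (sin t + √3 * cos t) / 2 := by
  rw [sin_add, cos_pi_div_three, sin_pi_div_three]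
  ring

theorem cos_sub_pi_div_three (t : ℝ) : cos (t - π / 3) = (cos t + √3 * sin t) / 2 := by
  rw [cos_sub, cos_pi_div_three, sin_pi_div_three]
  ring

theorem sin_sub_pi_div_three (t : ℝ) : sin (t - π / 3) = (sin t - √3 * cos t) / 2 := by
  rw [sin_sub, cos_pi_div_three, sin_pi_div_three]
  ring

theorem rieszWeight_sum_eq_one (t : ℝ) :
    rieszWeight t + rieszWeight (t + π / 3) + rieszWeight (t - π / 3) = 1 := by
  have hcs := cos_sq_add_sin_sq t
  have h3 : √3 ^ 2 = 3 := sq_sqrt zero_le_three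
  simp only [rieszWeight, cos_two_mul, cos_add_pi_div_three, cos_sub_pi_div_three]
  grind

-- M. Riesz's formula at the point `0`, where the cubic has value `a` and derivative `3 * b`; the
-- nodes are the points `s` with `cos (3 * (s - t)) = ± 1`.
theorem mul_cos_add_mul_sin_eq_trigCubic (a b c d t : ℝ) :
    a * cos (3 * t) + b * sin (3 * t) =
      rieszWeight t * trigCubic a b c d t
        - rieszWeight (t + π / 3) * trigCubic a b c d (t + π / 3)
        - rieszWeight (t - π / 3) * trigCubic a b c d (t - π / 3) := by
  have hcs := cos_sq_add_sin_sq t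
  have h3 : √3 ^ 2 = 3 := sq_sqrt zero_le_three
  simp only [rieszWeight, trigCubic, cos_two_mul, cos_three_mul, sin_three_mul,
    cos_add_pi_div_three, sin_add_pi_div_three, cos_sub_pi_div_three, sin_sub_pi_div_three]
  grind

theorem abs_mul_cos_add_mul_sin_le {a b c d M : ℝ} (hM : ∀ t, |trigCubic a b c d t| ≤ M) (φ : ℝ) :
    |a * cos φ + b * sin φ| ≤ M := by
  obtain ⟨t, rfl⟩ : ∃ t, φ = 3 * t := ⟨φ / 3, by ring⟩
  have abs_term_le (s : ℝ) : |rieszWeight s * trigCubic a b c d s| ≤ rieszWeight s * M := by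
    rw [abs_mul, abs_of_nonneg (rieszWeight_nonneg s)]
    exact mul_le_mul_of_nonneg_left (hM s) (rieszWeight_nonneg s)
  rw [mul_cos_add_mul_sin_eq_trigCubic a b c d]
  calc
    _ ≤ rieszWeight t * M + rieszWeight (t + π / 3) * M + rieszWeight (t - π / 3) * M :=
      (abs_sub _ _).trans <| add_le_add ((abs_sub _ _).trans <|
        add_le_add (abs_term_le _) (abs_term_le _)) (abs_term_le _)
    _ = M := by rw [← add_mul, ← add_mul, rieszWeight_sum_eq_one, one_mul]

end TrigonometricCubic

section Forms

variable {E : Type*} [AddCommGroup E] [Module ℝ E]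

theorem sq_apply_le_of_abs_apply_self_le {B C : LinearMap.BilinForm ℝ E} (hC : C.IsSymm)
    (hCB : ∀ v, |C v v| ≤ B v v) (u v : E) : C u v ^ 2 ≤ B u u * B v v := by
  have quadratic_nonneg (t : ℝ) : 0 ≤ B u u * (t * t) + -(2 * C u v) * t + B v v := by
    have h_add := (le_abs_self _).trans (hCB (t • u + v))
    have h_sub := (neg_le_abs _).trans (hCB (t • u - v))
    have hvu : C v u = C u v := hC.eq v u
    simp only [map_add, map_sub, map_smul, LinearMap.add_apply, LinearMap.sub_apply,
      LinearMap.smul_apply, smul_eq_mul, hvu] at h_add h_sub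
    linarith
  have h := discrim_le_zero quadratic_nonneg
  rw [discrim] at h
  linarith

theorem exists_eq_cos_smul_add_sin_smul {B : LinearMap.BilinForm ℝ E} (hB : B.IsSymm)
    (hpos : ∀ v, v ≠ 0 → 0 < B v v) {u v : E} (hu : B u u = 1) (hv : B v v = 1) :
    ∃ (φ : ℝ) (e : E), u = Real.cos φ • v + Real.sin φ • e ∧ B v e = 0 ∧ B e e ≤ 1 := by
  set α := B v u with hα
  set z := u - α • v with hz
  have hvz : B v z = 0 := by
    simp only [hz, map_sub, map_smul, hv, ← hα, smul_eq_mul, mul_one, sub_self]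
  have hzz : B z z = 1 - α ^ 2 := by
    have huv : B u v = α := hB.eq u v
    simp only [hz, map_sub, map_smul, LinearMap.sub_apply, LinearMap.smul_apply, hu, hv, huv,
      ← hα, smul_eq_mul]
    ring
  have hzz_nonneg : 0 ≤ B z z := by
    rcases eq_or_ne z 0 with h | h
    · simp [h]
    · exact (hpos z h).le
  have hα_abs : |α| ≤ 1 := by
    rw [← sq_le_one_iff_abs_le_one]
    linarith
  have hcos : Real.cos (Real.arccos α) = α :=
    Real.cos_arccos (abs_le.1 hα_abs).1 (abs_le.1 hα_abs).2
  have hsin : Real.sin (Real.arccos α) ^ 2 = B z z := by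
    rw [Real.sin_arccos, hzz, Real.sq_sqrt (hzz ▸ hzz_nonneg)]
  set β := Real.sin (Real.arccos α)
  refine ⟨Real.arccos α, β⁻¹ • z, ?_, by rw [map_smul, hvz, smul_zero], ?_⟩
  · have hβz : β • β⁻¹ • z = z := by
      rcases eq_or_ne z 0 with h | h
      · simp [h]
      · have hβ : β ≠ 0 := fun h0 => (hpos z h).ne' (by rw [← hsin, h0]; norm_num)
        exact smul_inv_smul₀ hβ z
    rw [hcos, hβz, hz, add_sub_cancel]
  · simp only [map_smul, LinearMap.smul_apply, smul_eq_mul, ← hsin]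
    rcases eq_or_ne β 0 with h | h
    · simp [h]
    · exact le_of_eq (by field_simp)

variable {A : E →ₗ[ℝ] E →ₗ[ℝ] E →ₗ[ℝ] ℝ} {B : LinearMap.BilinForm ℝ E} {M : ℝ}

theorem apply_cos_smul_add_sin_smul (hA : ∀ u v w, A u v w = A v u w)
    (hA' : ∀ u v w, A u v w = A u w v) (v e : E) (t : ℝ) :
    A (Real.cos t • v + Real.sin t • e) (Real.cos t • v + Real.sin t • e)
        (Real.cos t • v + Real.sin t • e) =
      trigCubic (A v v v) (A e v v) (A v e e) (A e e e) t := by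
  have h_vev : A v e v = A e v v := hA v e v
  have h_vve : A v v e = A e v v := (hA' v v e).trans h_vev
  have h_eve : A e v e = A v e e := hA e v e
  have h_eev : A e e v = A v e e := (hA' e e v).trans h_eve
  simp only [map_add, map_smul, LinearMap.add_apply, LinearMap.smul_apply, smul_eq_mul,
    h_vev, h_vve, h_eve, h_eev, trigCubic]
  ring

theorem abs_apply_le_of_unit (hA : ∀ u v w, A u v w = A v u w)
    (hA' : ∀ u v w, A u v w = A u w v) (hB : B.IsSymm) (hpos : ∀ v, v ≠ 0 → 0 < B v v)
    (hAB : ∀ v, |A v v v| ≤ M * √(B v v) ^ 3) {u v : E} (hu : B u u = 1) (hv : B v v = 1) :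
    |A u v v| ≤ M := by
  obtain ⟨φ, e, rfl, hve, hee⟩ := exists_eq_cos_smul_add_sin_smul hB hpos hu hv
  have hM : 0 ≤ M := by simpa [hv] using (abs_nonneg _).trans (hAB v)
  have hev : B e v = 0 := (hB.eq e v).trans hve
  have circle_le (t : ℝ) : |trigCubic (A v v v) (A e v v) (A v e e) (A e e e) t| ≤ M := by
    rw [← apply_cos_smul_add_sin_smul hA hA']
    refine (hAB _).trans (mul_le_of_le_one_right hM (pow_le_one₀ (Real.sqrt_nonneg _) ?_))
    rw [Real.sqrt_le_one]
    simp only [map_add, map_smul, LinearMap.add_apply, LinearMap.smul_apply, smul_eq_mul,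
      hv, hve, hev]
    nlinarith [Real.cos_sq_add_sin_sq t, sq_nonneg (Real.sin t)]
  have h := abs_mul_cos_add_mul_sin_le circle_le φ
  simpa only [map_add, map_smul, LinearMap.add_apply, LinearMap.smul_apply, smul_eq_mul,
    mul_comm] using h

theorem abs_apply_le_of_abs_apply_diag_le (hA : ∀ u v w, A u v w = A v u w)
    (hA' : ∀ u v w, A u v w = A u w v) (hB : B.IsSymm) (hpos : ∀ v, v ≠ 0 → 0 < B v v)
    (hAB : ∀ v, |A v v v| ≤ M * √(B v v) ^ 3) (u v : E) :
    |A u v v| ≤ M * (√(B u u) * √(B v v) ^ 2) := by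
  rcases eq_or_ne u 0 with rfl | hu
  · simp
  rcases eq_or_ne v 0 with rfl | hv
  · simp
  have normalize {w : E} (hw : w ≠ 0) :
      0 < √(B w w) ∧ B ((√(B w w))⁻¹ • w) ((√(B w w))⁻¹ • w) = 1 := by
    have hsqrt := Real.sqrt_pos.2 (hpos w hw)
    refine ⟨hsqrt, ?_⟩
    simp only [map_smul, LinearMap.smul_apply, smul_eq_mul]
    field_simp
    exact (Real.sq_sqrt (hpos w hw).le).symm
  obtain ⟨hu_pos, hu_unit⟩ := normalize hu
  obtain ⟨hv_pos, hv_unit⟩ := normalize hv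
  have h := abs_apply_le_of_unit hA hA' hB hpos hAB hu_unit hv_unit
  simp only [map_smul, LinearMap.smul_apply, smul_eq_mul, abs_mul, abs_inv, abs_of_pos hu_pos,
    abs_of_pos hv_pos] at h
  field_simp at h
  linarith

end Forms

theorem abs_sub_le_of_abs_deriv_le_deriv {φ φ' B B' : ℝ → ℝ} {a b : ℝ} (hab : a ≤ b)
    (hφ : ∀ s ∈ Set.Icc a b, HasDerivAt φ (φ' s) s) (hB : ∀ s ∈ Set.Icc a b, HasDerivAt B (B' s) s)
    (hle : ∀ s ∈ Set.Icc a b, |φ' s| ≤ B' s) : |φ b - φ a| ≤ B b - B a := by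
  have mem_Icc {s : ℝ} (hs : s ∈ Set.Ico a b) := Set.Ico_subset_Icc_self hs
  exact image_norm_le_of_norm_deriv_right_le_deriv_boundary'
    (f := fun s => φ s - φ a) (B := fun s => B s - B a)
    (fun s hs => ((hφ s hs).sub_const _).continuousAt.continuousWithinAt)
    (fun s hs => ((hφ s (mem_Icc hs)).sub_const _).hasDerivWithinAt)
    (by simp)
    (fun s hs => ((hB s hs).sub_const _).continuousAt.continuousWithinAt)
    (fun s hs => ((hB s (mem_Icc hs)).sub_const _).hasDerivWithinAt)
    (fun s hs => hle s (mem_Icc hs)) (Set.right_mem_Icc.2 hab)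

section LineDerivatives

variable {E F : Type*} [NormedAddCommGroup E] [NormedSpace ℝ E]
  [NormedAddCommGroup F] [NormedSpace ℝ F]

theorem hasDerivAt_comp_add_smul {g : E → F} {x d : E} {t : ℝ}
    (hg : DifferentiableAt ℝ g (x + t • d)) :
    HasDerivAt (fun s : ℝ => g (x + s • d)) (fderiv ℝ g (x + t • d) d) t := by
  have h_line : HasDerivAt (fun s : ℝ => x + s • d) d t := by
    simpa using ((hasDerivAt_id t).smul_const d).const_add x
  exact HasFDerivAt.comp_hasDerivAt t hg.hasFDerivAt h_line

/-- The second derivative of `f`, as a bilinear form at each point. -/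
noncomputable abbrev hessian (f : E → ℝ) : E → E →L[ℝ] E →L[ℝ] ℝ :=
  fderiv ℝ (fderiv ℝ f)

/-- The third derivative of `f`, as a trilinear form at each point. The first argument is the
direction in which `hessian f` is differentiated. -/
noncomputable abbrev thirdDeriv (f : E → ℝ) : E → E →L[ℝ] E →L[ℝ] E →L[ℝ] ℝ :=
  fderiv ℝ (hessian f)

variable {f : E → ℝ}

theorem hasDerivAt_fderiv_apply_line (hf : ContDiff ℝ 2 f) (x d w : E) (t : ℝ) :
    HasDerivAt (fun s : ℝ => fderiv ℝ f (x + s • d) w) (hessian f (x + t • d) d w) t := by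
  have hdiff : Differentiable ℝ (fderiv ℝ f) :=
    (hf.fderiv_right (m := 1) le_rfl).differentiable one_ne_zero
  simpa using (hasDerivAt_comp_add_smul (hdiff _)).clm_apply (hasDerivAt_const t w)

theorem hasDerivAt_hessian_apply_line (hf : ContDiff ℝ 3 f) (x d v w : E) (t : ℝ) :
    HasDerivAt (fun s : ℝ => hessian f (x + s • d) v w) (thirdDeriv f (x + t • d) d v w) t := by
  have hdiff : Differentiable ℝ (hessian f) :=
    ((hf.fderiv_right (m := 2) le_rfl).fderiv_right (m := 1) le_rfl).differentiable one_ne_zero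
  have h : HasDerivAt (fun s : ℝ => hessian f (x + s • d)) (thirdDeriv f (x + t • d) d) t :=
    hasDerivAt_comp_add_smul (g := hessian f) (hdiff (x + t • d))
  simpa using (h.clm_apply (hasDerivAt_const t v)).clm_apply (hasDerivAt_const t w)

theorem iteratedDeriv_two_line (hf : ContDiff ℝ 2 f) (x u : E) (t : ℝ) :
    iteratedDeriv 2 (fun s : ℝ => f (x + s • u)) t = hessian f (x + t • u) u u := by
  have h_first : deriv (fun s : ℝ => f (x + s • u)) = fun s => fderiv ℝ f (x + s • u) u :=
    funext fun s => (hasDerivAt_comp_add_smul (hf.differentiable two_ne_zero _)).deriv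
  rw [iteratedDeriv_succ, iteratedDeriv_one, h_first]
  exact (hasDerivAt_fderiv_apply_line hf x u u t).deriv

theorem iteratedDeriv_three_line (hf : ContDiff ℝ 3 f) (x u : E) (t : ℝ) :
    iteratedDeriv 3 (fun s : ℝ => f (x + s • u)) t = thirdDeriv f (x + t • u) u u u := by
  have h_second := funext (iteratedDeriv_two_line (hf.of_le (by norm_num)) x u)
  rw [iteratedDeriv_succ, h_second]
  exact (hasDerivAt_hessian_apply_line hf x u u u t).deriv

theorem hessian_symm (hf : ContDiff ℝ 2 f) (x u v : E) : hessian f x u v = hessian f x v u :=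
  (hf.contDiffAt.isSymmSndFDerivAt (by simp)).eq u v

theorem isSymm_hessian_toBilinForm (hf : ContDiff ℝ 2 f) (x : E) :
    (hessian f x).toBilinForm.IsSymm :=
  ⟨hessian_symm hf x⟩

theorem thirdDeriv_symm_left (hf : ContDiff ℝ 3 f) (x u v w : E) :
    thirdDeriv f x u v w = thirdDeriv f x v u w := by
  have hf' : ContDiff ℝ 2 (fderiv ℝ f) := hf.fderiv_right le_rfl
  exact congrArg (· w) ((hf'.contDiffAt.isSymmSndFDerivAt (by simp)).eq u v)

theorem thirdDeriv_symm_right (hf : ContDiff ℝ 3 f) (x u v w : E) :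
    thirdDeriv f x u v w = thirdDeriv f x u w v := by
  have h_vw := hasDerivAt_hessian_apply_line hf x u v w 0
  have h_wv := hasDerivAt_hessian_apply_line hf x u w v 0
  simp only [hessian_symm (hf.of_le (by norm_num)) _ w v] at h_wv
  simpa using h_vw.unique h_wv

/-- The local norm `‖v‖ₓ = (∇²f(x)[v, v])^{1/2}` of self-concordance theory. -/
noncomputable def localNorm (f : E → ℝ) (x v : E) : ℝ :=
  √(hessian f x v v)

theorem localNorm_nonneg (f : E → ℝ) (x v : E) : 0 ≤ localNorm f x v :=
  Real.sqrt_nonneg _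

theorem localNorm_smul (f : E → ℝ) (x v : E) {t : ℝ} (ht : 0 ≤ t) :
    localNorm f x (t • v) = t * localNorm f x v := by
  simp only [localNorm, map_smul, _root_.smul_apply, smul_eq_mul]
  rw [← mul_assoc, Real.sqrt_mul (mul_self_nonneg t), Real.sqrt_mul_self ht]

end LineDerivatives

/-- Standard self-concordance: `|φ'''| ≤ 2 φ'' ^ (3 / 2)` for every restriction `φ` of `f` to a
line. Since `Real.rpow` returns `0` for a negative base and the exponent `3 / 2`, the bound alone
does not force convexity; positive definiteness of the Hessian is part of the notion. -/
structure IsSelfConcordant {E : Type*} [NormedAddCommGroup E] [NormedSpace ℝ E] (f : E → ℝ) :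
    Prop where
  contDiff : ContDiff ℝ 3 f
  hessian_pos : ∀ x v, v ≠ 0 → 0 < hessian f x v v
  abs_iteratedDeriv_three_le : ∀ (x u : E) (t : ℝ),
    |iteratedDeriv 3 (fun s : ℝ => f (x + s • u)) t|
      ≤ 2 * iteratedDeriv 2 (fun s : ℝ => f (x + s • u)) t ^ ((3 : ℝ) / 2)

namespace IsSelfConcordant

variable {E : Type*} [NormedAddCommGroup E] [NormedSpace ℝ E] {f : E → ℝ}

theorem contDiff_two (hf : IsSelfConcordant f) : ContDiff ℝ 2 f :=
  hf.contDiff.of_le (by norm_num)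

theorem hessian_nonneg (hf : IsSelfConcordant f) (x v : E) : 0 ≤ hessian f x v v := by
  rcases eq_or_ne v 0 with rfl | hv
  · simp
  · exact (hf.hessian_pos x v hv).le

theorem sq_localNorm (hf : IsSelfConcordant f) (x v : E) :
    localNorm f x v ^ 2 = hessian f x v v :=
  Real.sq_sqrt (hf.hessian_nonneg x v)

theorem localNorm_pos (hf : IsSelfConcordant f) (x : E) {v : E} (hv : v ≠ 0) :
    0 < localNorm f x v :=
  Real.sqrt_pos.2 (hf.hessian_pos x v hv)

theorem abs_thirdDeriv_self_le (hf : IsSelfConcordant f) (x v : E) :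
    |thirdDeriv f x v v v| ≤ 2 * localNorm f x v ^ 3 := by
  have h := hf.abs_iteratedDeriv_three_le x v 0
  rw [iteratedDeriv_three_line hf.contDiff, iteratedDeriv_two_line hf.contDiff_two, zero_smul,
    add_zero, ← hf.sq_localNorm, ← Real.rpow_natCast_mul (localNorm_nonneg f x v)] at h
  norm_num at h
  exact_mod_cast h

theorem abs_thirdDeriv_le (hf : IsSelfConcordant f) (x u v : E) :
    |thirdDeriv f x u v v| ≤ 2 * (localNorm f x u * localNorm f x v ^ 2) :=
  abs_apply_le_of_abs_apply_diag_le
    (A := (thirdDeriv f x).toLinearMap₁₂.compr₂ (ContinuousLinearMap.coeLM ℝ))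
    (B := (hessian f x).toBilinForm)
    (thirdDeriv_symm_left hf.contDiff x) (thirdDeriv_symm_right hf.contDiff x)
    (isSymm_hessian_toBilinForm hf.contDiff_two x) (hf.hessian_pos x)
    (hf.abs_thirdDeriv_self_le x) u v

theorem abs_hessian_apply_le (hf : IsSelfConcordant f) (x u v : E) :
    |hessian f x u v| ≤ localNorm f x u * localNorm f x v := by
  refine abs_le_of_sq_le_sq ?_ (mul_nonneg (localNorm_nonneg f x u) (localNorm_nonneg f x v))
  rw [mul_pow, hf.sq_localNorm, hf.sq_localNorm]
  exact sq_apply_le_of_abs_apply_self_le (B := (hessian f x).toBilinForm)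
    (isSymm_hessian_toBilinForm hf.contDiff_two x)
    (fun w => (abs_of_nonneg (hf.hessian_nonneg x w)).le) u v

theorem localNorm_line_le (hf : IsSelfConcordant f) {x d : E} {t : ℝ} (ht : 0 ≤ t)
    (hd : t * localNorm f x d < 1) :
    localNorm f (x + t • d) d ≤ localNorm f x d / (1 - t * localNorm f x d) := by
  rcases eq_or_ne d 0 with rfl | hd0
  · simp [localNorm]
  have hpos (s : ℝ) : 0 < localNorm f (x + s • d) d := hf.localNorm_pos _ hd0
  have hderiv (s : ℝ) := ((hasDerivAt_hessian_apply_line hf.contDiff x d d d s).sqrt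
    (hf.hessian_pos _ d hd0).ne').fun_inv (hpos s).ne'
  have h_inv := abs_sub_le_of_abs_deriv_le_deriv (φ := fun s => (localNorm f (x + s • d) d)⁻¹)
    ht (fun s _ => hderiv s) (fun s _ => hasDerivAt_id s) (fun s _ => by
      change |-(thirdDeriv f (x + s • d) d d d / (2 * localNorm f (x + s • d) d))
        / localNorm f (x + s • d) d ^ 2| ≤ 1
      have := hpos s
      rw [abs_div, abs_neg, abs_div, abs_of_pos (by positivity : 0 < 2 * localNorm f (x + s • d) d),
        abs_of_pos (pow_pos this 2), div_div, div_le_one (by positivity)]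
      linarith [hf.abs_thirdDeriv_self_le (x + s • d) d])
  have h_le := (abs_le.1 h_inv).1
  have hx : 0 < localNorm f x d := hf.localNorm_pos x hd0
  simp only [zero_smul, add_zero, id, sub_zero] at h_le
  rw [← inv_le_inv₀ (div_pos hx (by linarith)) (hpos t), inv_div, sub_div,
    mul_div_cancel_right₀ _ hx.ne', one_div]
  linarith

theorem abs_thirdDeriv_line_div_le (hf : IsSelfConcordant f) {x d v : E} (hv : v ≠ 0) {t : ℝ}
    (ht : 0 ≤ t) (hd : t * localNorm f x d < 1) :
    |thirdDeriv f (x + t • d) d v v / hessian f (x + t • d) v v| ≤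
      2 * (localNorm f x d / (1 - t * localNorm f x d)) := by
  have hpos := hf.hessian_pos (x + t • d) v hv
  rw [abs_div, abs_of_pos hpos, div_le_iff₀ hpos, ← hf.sq_localNorm]
  calc
    _ ≤ 2 * (localNorm f (x + t • d) d * localNorm f (x + t • d) v ^ 2) :=
      hf.abs_thirdDeriv_le _ d v
    _ ≤ 2 * (localNorm f x d / (1 - t * localNorm f x d) * localNorm f (x + t • d) v ^ 2) := by
      gcongr
      exact hf.localNorm_line_le ht hd
    _ = _ := by ring

theorem abs_log_hessian_sub_le (hf : IsSelfConcordant f) {x d v : E} (hv : v ≠ 0)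
    (hd : localNorm f x d < 1) :
    |Real.log (hessian f (x + d) v v) - Real.log (hessian f x v v)| ≤
      -(2 * Real.log (1 - localNorm f x d)) := by
  have hlt (s : ℝ) (hs : s ∈ Set.Icc (0 : ℝ) 1) : s * localNorm f x d < 1 :=
    (mul_le_of_le_one_left (localNorm_nonneg f x d) hs.2).trans_lt hd
  have hlog (s : ℝ) (hs : s ∈ Set.Icc (0 : ℝ) 1) :
      HasDerivAt (fun s : ℝ => -(2 * Real.log (1 - s * localNorm f x d)))
        (2 * (localNorm f x d / (1 - s * localNorm f x d))) s := by
    have h_line : HasDerivAt (fun s : ℝ => 1 - s * localNorm f x d) (-localNorm f x d) s := by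
      simpa using ((hasDerivAt_id s).mul_const (localNorm f x d)).const_sub 1
    exact ((h_line.log (sub_pos.2 (hlt s hs)).ne').const_mul 2).fun_neg.congr_deriv (by ring)
  simpa using abs_sub_le_of_abs_deriv_le_deriv zero_le_one
    (fun s _ => (hasDerivAt_hessian_apply_line hf.contDiff x d v v s).log
      (hf.hessian_pos _ v hv).ne')
    hlog (fun s hs => hf.abs_thirdDeriv_line_div_le hv hs.1 (hlt s hs))

theorem hessian_mul_sq_le (hf : IsSelfConcordant f) {x d : E} (hd : localNorm f x d < 1) (v : E) :
    hessian f x v v * (1 - localNorm f x d) ^ 2 ≤ hessian f (x + d) v v := by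
  rcases eq_or_ne v 0 with rfl | hv
  · simp
  have hr : 0 < (1 - localNorm f x d) ^ 2 := pow_pos (sub_pos.2 hd) 2
  have hx := hf.hessian_pos x v hv
  rw [← Real.log_le_log_iff (mul_pos hx hr) (hf.hessian_pos _ v hv),
    Real.log_mul hx.ne' hr.ne', Real.log_pow]
  push_cast
  linarith [(abs_le.1 (hf.abs_log_hessian_sub_le hv hd)).1]

theorem hessian_add_mul_sq_le (hf : IsSelfConcordant f) {x d : E} (hd : localNorm f x d < 1)
    (v : E) :
    hessian f (x + d) v v * (1 - localNorm f x d) ^ 2 ≤ hessian f x v v := by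
  rcases eq_or_ne v 0 with rfl | hv
  · simp
  have hr : 0 < (1 - localNorm f x d) ^ 2 := pow_pos (sub_pos.2 hd) 2
  have hxd := hf.hessian_pos (x + d) v hv
  rw [← Real.log_le_log_iff (mul_pos hxd hr) (hf.hessian_pos _ v hv),
    Real.log_mul hxd.ne' hr.ne', Real.log_pow]
  push_cast
  linarith [(abs_le.1 (hf.abs_log_hessian_sub_le hv hd)).2]

theorem localNorm_mul_one_sub_le (hf : IsSelfConcordant f) {x d : E} (hd : localNorm f x d < 1)
    (v : E) : localNorm f x v * (1 - localNorm f x d) ≤ localNorm f (x + d) v := by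
  refine Real.le_sqrt_of_sq_le ?_
  rw [mul_pow, hf.sq_localNorm]
  exact hf.hessian_mul_sq_le hd v

theorem abs_hessian_sub_self_le (hf : IsSelfConcordant f) {x d : E} (hd : localNorm f x d < 1)
    (v : E) :
    |hessian f (x + d) v v - hessian f x v v| ≤
      (((1 - localNorm f x d) ^ 2)⁻¹ - 1) * hessian f x v v := by
  have h_lower := hf.hessian_mul_sq_le hd v
  have h_upper := hf.hessian_add_mul_sq_le hd v
  set c := (1 - localNorm f x d) ^ 2
  have hc : 0 < c := pow_pos (sub_pos.2 hd) 2
  rw [← le_div_iff₀ hc, div_eq_inv_mul] at h_upper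
  have two_le_add_inv : 2 ≤ c + c⁻¹ := by
    field_simp
    nlinarith [sq_nonneg (c - 1)]
  rw [abs_le]
  constructor
  · nlinarith [hf.hessian_nonneg x v]
  · linarith

theorem abs_hessian_sub_le (hf : IsSelfConcordant f) {x d : E} (hd : localNorm f x d < 1)
    (u v : E) :
    |hessian f (x + d) u v - hessian f x u v| ≤
      (((1 - localNorm f x d) ^ 2)⁻¹ - 1) * (localNorm f x u * localNorm f x v) := by
  have hκ : 0 ≤ ((1 - localNorm f x d) ^ 2)⁻¹ - 1 := by
    rw [sub_nonneg, one_le_inv₀ (pow_pos (sub_pos.2 hd) 2)]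
    exact pow_le_one₀ (sub_pos.2 hd).le (sub_le_self 1 (localNorm_nonneg f x d))
  have h_sq := sq_apply_le_of_abs_apply_self_le
    (B := (((1 - localNorm f x d) ^ 2)⁻¹ - 1) • (hessian f x).toBilinForm)
    (C := (hessian f (x + d)).toBilinForm - (hessian f x).toBilinForm)
    (((isSymm_hessian_toBilinForm hf.contDiff_two (x + d))).sub
      (isSymm_hessian_toBilinForm hf.contDiff_two x))
    (hf.abs_hessian_sub_self_le hd) u v
  refine abs_le_of_sq_le_sq ?_ (mul_nonneg hκ
    (mul_nonneg (localNorm_nonneg f x u) (localNorm_nonneg f x v)))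
  rw [mul_pow, mul_pow, hf.sq_localNorm, hf.sq_localNorm]
  refine h_sq.trans (le_of_eq ?_)
  simp only [LinearMap.smul_apply, ContinuousLinearMap.toBilinForm_apply, smul_eq_mul]
  ring

theorem abs_fderiv_sub_sub_le (hf : IsSelfConcordant f) {x d : E} (hd : localNorm f x d < 1)
    (w : E) :
    |fderiv ℝ f (x + d) w - fderiv ℝ f x w - hessian f x d w| ≤
      localNorm f x d ^ 2 / (1 - localNorm f x d) * localNorm f x w := by
  set r := localNorm f x d
  have hr : 0 ≤ r := localNorm_nonneg f x d
  have hlt {s : ℝ} (hs : s ∈ Set.Icc (0 : ℝ) 1) : s * r < 1 :=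
    (mul_le_of_le_one_left hr hs.2).trans_lt hd
  have h_remainder (s : ℝ) :
      HasDerivAt (fun s : ℝ => fderiv ℝ f (x + s • d) w - s * hessian f x d w)
        (hessian f (x + s • d) d w - hessian f x d w) s := by
    simpa using (hasDerivAt_fderiv_apply_line hf.contDiff_two x d w s).fun_sub
      ((hasDerivAt_id s).mul_const (hessian f x d w))
  have h_majorant (s : ℝ) (hs : s ∈ Set.Icc (0 : ℝ) 1) :
      HasDerivAt (fun s : ℝ => ((1 - s * r)⁻¹ - s * r) * localNorm f x w)
        ((((1 - s * r) ^ 2)⁻¹ - 1) * (r * localNorm f x w)) s := by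
    have h_line : HasDerivAt (fun s : ℝ => s * r) r s := by
      simpa using (hasDerivAt_id s).mul_const r
    exact ((((h_line.const_sub 1).fun_inv (sub_pos.2 (hlt hs)).ne').fun_sub h_line).mul_const
      (localNorm f x w)).congr_deriv (by ring)
  have h_bound (s : ℝ) (hs : s ∈ Set.Icc (0 : ℝ) 1) :
      |hessian f (x + s • d) d w - hessian f x d w| ≤
        (((1 - s * r) ^ 2)⁻¹ - 1) * (r * localNorm f x w) := by
    have h_smul : localNorm f x (s • d) = s * r := localNorm_smul f x d hs.1
    rw [← h_smul]
    exact hf.abs_hessian_sub_le (h_smul ▸ hlt hs) d w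
  have h := abs_sub_le_of_abs_deriv_le_deriv zero_le_one (fun s _ => h_remainder s) h_majorant
    h_bound
  have h_value : (1 - r)⁻¹ - r - 1 = r ^ 2 / (1 - r) := by
    have : 1 - r ≠ 0 := (sub_pos.2 hd).ne'
    field_simp
    ring
  simp only [one_smul, zero_smul, add_zero, one_mul, zero_mul, sub_zero, inv_one] at h
  rwa [sub_right_comm, ← h_value, sub_mul, one_mul]

-- Up to sign, `k` and `w` are the Newton directions at `x` and `x + d`; their local norms are the
-- Newton decrements there.
theorem localNorm_newton_le (hf : IsSelfConcordant f) {x d k w : E} (hd : localNorm f x d < 1)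
    (hk : hessian f x k = fderiv ℝ f x) (hw : hessian f (x + d) w = fderiv ℝ f (x + d)) :
    localNorm f (x + d) w ≤
      localNorm f x (k + d) / (1 - localNorm f x d)
        + (localNorm f x d / (1 - localNorm f x d)) ^ 2 := by
  set r := localNorm f x d
  set K := localNorm f x (k + d) + r ^ 2 / (1 - r) with hK_def
  have hr : 0 < 1 - r := sub_pos.2 hd
  have hK : 0 ≤ K := add_nonneg (localNorm_nonneg f x _) (div_nonneg (sq_nonneg r) hr.le)
  have h_sq : localNorm f (x + d) w ^ 2 ≤ K * localNorm f x w := by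
    have h_taylor := (abs_le.1 (hf.abs_fderiv_sub_sub_le hd w)).2
    have h_cs := (abs_le.1 (hf.abs_hessian_apply_le x (k + d) w)).2
    rw [map_add, _root_.add_apply, hk] at h_cs
    rw [hf.sq_localNorm, hw, hK_def, add_mul]
    linarith
  have h_transport : localNorm f x w ≤ localNorm f (x + d) w / (1 - r) :=
    (le_div_iff₀ hr).2 (hf.localNorm_mul_one_sub_le hd w)
  have h_le : localNorm f (x + d) w ≤ K / (1 - r) := by
    rcases (localNorm_nonneg f (x + d) w).eq_or_lt with h0 | hpos
    · exact h0 ▸ div_nonneg hK hr.le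
    · refine le_of_mul_le_mul_right ?_ hpos
      calc
        _ = localNorm f (x + d) w ^ 2 := (sq _).symm
        _ ≤ K * localNorm f x w := h_sq
        _ ≤ K * (localNorm f (x + d) w / (1 - r)) := mul_le_mul_of_nonneg_left h_transport hK
        _ = K / (1 - r) * localNorm f (x + d) w := by ring
  refine h_le.trans (le_of_eq ?_)
  rw [hK_def]
  field_simp

theorem localNorm_newton_le_of_sq_localNorm_le (hf : IsSelfConcordant f) {x d k w : E}
    (hk : hessian f x k = fderiv ℝ f x) (hw : hessian f (x + d) w = fderiv ℝ f (x + d))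
    (hk1 : localNorm f x k < 1) (hd : localNorm f x d ^ 2 ≤ -fderiv ℝ f x d) :
    localNorm f (x + d) w ≤
      (√(localNorm f x k ^ 2 + fderiv ℝ f x d) + localNorm f x k ^ 2)
        / (1 - localNorm f x k) ^ 2 := by
  have h_expand : localNorm f x (k + d) ^ 2 =
      localNorm f x k ^ 2 + 2 * fderiv ℝ f x d + localNorm f x d ^ 2 := by
    simp only [hf.sq_localNorm, map_add, _root_.add_apply, hessian_symm hf.contDiff_two x d k, hk]
    ring
  have h_add : localNorm f x (k + d) ≤ √(localNorm f x k ^ 2 + fderiv ℝ f x d) :=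
    Real.le_sqrt_of_sq_le (by linarith)
  have hr : localNorm f x d ≤ localNorm f x k :=
    le_of_sq_le_sq (by nlinarith [sq_nonneg (localNorm f x (k + d))]) (localNorm_nonneg f x k)
  have hr0 := localNorm_nonneg f x d
  have hr1 : 0 < 1 - localNorm f x d := sub_pos.2 (hr.trans_lt hk1)
  set S := √(localNorm f x k ^ 2 + fderiv ℝ f x d)
  calc
    _ ≤ localNorm f x (k + d) / (1 - localNorm f x d)
        + (localNorm f x d / (1 - localNorm f x d)) ^ 2 :=
      hf.localNorm_newton_le (hr.trans_lt hk1) hk hw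
    _ ≤ S / (1 - localNorm f x d) ^ 2 + (localNorm f x d / (1 - localNorm f x d)) ^ 2 := by
      gcongr
      exact pow_le_of_le_one hr1.le (sub_le_self 1 hr0) two_ne_zero
    _ = (S + localNorm f x d ^ 2) / (1 - localNorm f x d) ^ 2 := by rw [div_pow, ← add_div]
    _ ≤ (S + localNorm f x k ^ 2) / (1 - localNorm f x k) ^ 2 := by gcongr

end IsSelfConcordant

section Coordinates

variable {ι : Type*} [Fintype ι] {f : (ι → ℝ) → ℝ} {H : Matrix ι ι ℝ} {x g : ι → ℝ}

theorem hessian_apply_eq_dotProduct_mulVec (hf : ContDiff ℝ 2 f) (hH : H.IsSymm)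
    (hq : ∀ u, iteratedDeriv 2 (fun t : ℝ => f (x + t • u)) 0 = u ⬝ᵥ (H *ᵥ u)) (u v : ι → ℝ) :
    hessian f x u v = u ⬝ᵥ (H *ᵥ v) := by
  classical
  have h_form : (hessian f x).toBilinForm = Matrix.toBilin' H := by
    refine LinearMap.BilinForm.ext_of_isSymm (isSymm_hessian_toBilinForm hf x)
      ⟨fun v w => ?_⟩ fun w => ?_
    · rw [Matrix.toBilin'_apply', Matrix.toBilin'_apply', dotProduct_comm,
        ← vecMul_transpose, hH.eq, dotProduct_mulVec]
    · rw [Matrix.toBilin'_apply', ← hq, iteratedDeriv_two_line hf, zero_smul, add_zero]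
      rfl
  exact (LinearMap.congr_fun₂ h_form u v).trans (Matrix.toBilin'_apply' H u v)

variable [DecidableEq ι]

theorem hessian_inv_mulVec_eq_fderiv (hHess : ∀ u v, hessian f x u v = u ⬝ᵥ (H *ᵥ v))
    (hgrad : ∀ u, fderiv ℝ f x u = g ⬝ᵥ u) (hH : H.PosDef) :
    hessian f x (H⁻¹ *ᵥ g) = fderiv ℝ f x := by
  have hH_symm : Hᵀ = H := isHermitian_iff_isSymm.1 hH.isHermitian
  have hdet : IsUnit H.det := (isUnit_iff_isUnit_det H).1 hH.isUnit
  ext1 v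
  rw [hHess, hgrad, dotProduct_mulVec, ← mulVec_transpose, hH_symm, mulVec_mulVec,
    mul_nonsing_inv H hdet, one_mulVec]

theorem localNorm_inv_mulVec (hHess : ∀ u v, hessian f x u v = u ⬝ᵥ (H *ᵥ v))
    (hgrad : ∀ u, fderiv ℝ f x u = g ⬝ᵥ u) (hH : H.PosDef) :
    localNorm f x (H⁻¹ *ᵥ g) = √(g ⬝ᵥ (H⁻¹ *ᵥ g)) := by
  rw [localNorm, hessian_inv_mulVec_eq_fderiv hHess hgrad hH, hgrad]

end Coordinates

section CoarseStep

variable {ι κ : Type*} [Fintype ι] [Fintype κ] [DecidableEq κ]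

theorem dotProduct_mulVec_coarse_le {H : Matrix ι ι ℝ} {P : Matrix ι κ ℝ} {Q : Matrix κ κ ℝ}
    (hQ : IsUnit Q) (hle : (Q - Pᵀ * H * P).PosSemidef) (g : ι → ℝ) :
    (P *ᵥ (Q⁻¹ *ᵥ (Pᵀ *ᵥ g))) ⬝ᵥ (H *ᵥ (P *ᵥ (Q⁻¹ *ᵥ (Pᵀ *ᵥ g)))) ≤
      g ⬝ᵥ (P *ᵥ (Q⁻¹ *ᵥ (Pᵀ *ᵥ g))) := by
  have hdet : IsUnit Q.det := (isUnit_iff_isUnit_det Q).1 hQ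
  set y := Q⁻¹ *ᵥ (Pᵀ *ᵥ g) with hy
  have hQy : Q *ᵥ y = Pᵀ *ᵥ g := by
    rw [hy, mulVec_mulVec, mul_nonsing_inv Q hdet, one_mulVec]
  have h_nonneg : 0 ≤ y ⬝ᵥ ((Q - Pᵀ * H * P) *ᵥ y) := hle.dotProduct_mulVec_nonneg y
  have h_reduced : y ⬝ᵥ ((Pᵀ * H * P) *ᵥ y) = (P *ᵥ y) ⬝ᵥ (H *ᵥ (P *ᵥ y)) := by
    rw [← mulVec_mulVec, ← mulVec_mulVec, dotProduct_mulVec, vecMul_transpose]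
  have h_gradient : y ⬝ᵥ (Q *ᵥ y) = g ⬝ᵥ (P *ᵥ y) := by
    rw [hQy, dotProduct_mulVec, vecMul_transpose, dotProduct_comm]
  rw [sub_mulVec, dotProduct_sub, h_reduced, h_gradient] at h_nonneg
  linarith

end CoarseStep

section OrthonormalEigenvectors

variable {ι : Type*} [Fintype ι] [DecidableEq ι] {u : ι → ι → ℝ} {s t : ι → ℝ}
  {A B : Matrix ι ι ℝ}

theorem of_mul_transpose_of_eq_one (hu : ∀ i j, u i ⬝ᵥ u j = if i = j then (1 : ℝ) else 0) :
    Matrix.of u * (Matrix.of u)ᵀ = 1 := by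
  ext i j
  simpa [Matrix.mul_apply, dotProduct, Matrix.one_apply] using hu i j

theorem isUnit_of_orthonormal (hu : ∀ i j, u i ⬝ᵥ u j = if i = j then (1 : ℝ) else 0) :
    IsUnit (Matrix.of u) :=
  IsUnit.of_mul_eq_one _ (of_mul_transpose_of_eq_one hu)

theorem eq_star_mul_diagonal_mul (hu : ∀ i j, u i ⬝ᵥ u j = if i = j then (1 : ℝ) else 0)
    (hA : ∀ i, A *ᵥ u i = s i • u i) :
    A = star (Matrix.of u) * diagonal s * Matrix.of u := by
  have h_comm : A * (Matrix.of u)ᵀ = (Matrix.of u)ᵀ * diagonal s := by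
    ext i j
    simpa [Matrix.mul_apply, mulVec, dotProduct, diagonal, mul_comm] using congrFun (hA j) i
  rw [star_eq_conjTranspose, conjTranspose_eq_transpose_of_trivial, ← h_comm, Matrix.mul_assoc,
    mul_eq_one_comm.1 (of_mul_transpose_of_eq_one hu), Matrix.mul_one]

theorem posDef_of_eigenvalues_pos (hu : ∀ i j, u i ⬝ᵥ u j = if i = j then (1 : ℝ) else 0)
    (hA : ∀ i, A *ᵥ u i = s i • u i) (hs : ∀ i, 0 < s i) : A.PosDef := by
  rw [eq_star_mul_diagonal_mul hu hA,
    (isUnit_of_orthonormal hu).posDef_star_left_conjugate_iff]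
  exact PosDef.diagonal hs

theorem posSemidef_sub_of_eigenvalues_le
    (hu : ∀ i j, u i ⬝ᵥ u j = if i = j then (1 : ℝ) else 0)
    (hA : ∀ i, A *ᵥ u i = s i • u i) (hB : ∀ i, B *ᵥ u i = t i • u i) (hst : ∀ i, s i ≤ t i) :
    (B - A).PosSemidef := by
  rw [eq_star_mul_diagonal_mul hu hA, eq_star_mul_diagonal_mul hu hB, ← Matrix.sub_mul,
    ← Matrix.mul_sub, diagonal_sub, (isUnit_of_orthonormal hu).posSemidef_star_left_conjugate_iff]
  exact PosSemidef.diagonal fun i => sub_nonneg.2 (hst i)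

end OrthonormalEigenvectors

theorem le_truncation {α : Type*} [Preorder α] {N p : ℕ} {σ : Fin N → α} (hσ : Antitone σ)
    (hp : p < N) (i : Fin N) : σ i ≤ if (i : ℕ) < p then σ i else σ ⟨p, hp⟩ := by
  split_ifs with hi
  · exact le_rfl
  · exact hσ (not_lt.1 hi)

theorem stmt17_general {ι κ : Type*} [Fintype ι] [DecidableEq ι] [Fintype κ] [DecidableEq κ]
    (f : (ι → ℝ) → ℝ) (grad : (ι → ℝ) → ι → ℝ) (hess : (ι → ℝ) → Matrix ι ι ℝ)
    (hf : ContDiff ℝ 3 f)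
    (hgrad : ∀ x u : ι → ℝ, deriv (fun t : ℝ => f (x + t • u)) 0 = grad x ⬝ᵥ u)
    (hhessq : ∀ x u : ι → ℝ,
      iteratedDeriv 2 (fun t : ℝ => f (x + t • u)) 0 = u ⬝ᵥ (hess x *ᵥ u))
    (hhpd : ∀ x, (hess x).PosDef)
    (hsc : ∀ x u : ι → ℝ, ∀ t : ℝ,
      |iteratedDeriv 3 (fun s : ℝ => f (x + s • u)) t|
        ≤ 2 * iteratedDeriv 2 (fun s : ℝ => f (x + s • u)) t ^ ((3 : ℝ) / 2))
    (x : ι → ℝ) (P : Matrix ι κ ℝ) (Q : Matrix κ κ ℝ) (hQ : IsUnit Q)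
    (hPQ : (Q - Pᵀ * hess x * P).PosSemidef)
    (lam : ℝ) (hlam : lam = √(grad x ⬝ᵥ ((hess x)⁻¹ *ᵥ grad x))) (hlam1 : lam < 1)
    (lamhat : ℝ) (hlamhat : lamhat = √(grad x ⬝ᵥ (P *ᵥ (Q⁻¹ *ᵥ (Pᵀ *ᵥ grad x)))))
    (d : ι → ℝ) (hd : d = -(P *ᵥ (Q⁻¹ *ᵥ (Pᵀ *ᵥ grad x)))) :
    √(grad (x + d) ⬝ᵥ ((hess (x + d))⁻¹ *ᵥ grad (x + d))) ≤
      (√(lam ^ 2 - lamhat ^ 2) + lam ^ 2) / (1 - lam) ^ 2 := by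
  have h_hess (y) := hessian_apply_eq_dotProduct_mulVec (hf.of_le (by norm_num))
    (isHermitian_iff_isSymm.1 (hhpd y).isHermitian) (hhessq y)
  have h_grad (y u) : fderiv ℝ f y u = grad y ⬝ᵥ u :=
    ((hf.differentiable three_ne_zero y).lineDeriv_eq_fderiv).symm.trans (hgrad y u)
  have h_sc : IsSelfConcordant f :=
    ⟨hf, fun y v hv => h_hess y v v ▸ (hhpd y).dotProduct_mulVec_pos hv, hsc⟩
  have h_newton (y) := hessian_inv_mulVec_eq_fderiv (h_hess y) (h_grad y) (hhpd y)
  have h_decrement (y) := localNorm_inv_mulVec (h_hess y) (h_grad y) (hhpd y)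
  have h_step : localNorm f x d ^ 2 ≤ -fderiv ℝ f x d := by
    rw [h_sc.sq_localNorm, h_hess, h_grad, hd]
    simpa [mulVec_neg] using dotProduct_mulVec_coarse_le hQ hPQ (grad x)
  have h_lamhat : fderiv ℝ f x d = -lamhat ^ 2 := by
    have h_nonneg := (sq_nonneg _).trans h_step
    rw [h_grad, hd, dotProduct_neg, neg_neg] at h_nonneg
    rw [h_grad, hd, dotProduct_neg, hlamhat, Real.sq_sqrt h_nonneg]
  rw [← h_decrement] at hlam ⊢
  subst hlam
  rw [sub_eq_add_neg, ← h_lamhat]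
  exact h_sc.localNorm_newton_le_of_sq_localNorm_le (h_newton x) (h_newton (x + d)) hlam1 h_step

/-- Let `f` be strictly convex standard self-concordant, `x`
a point with Newton decrement `λ(x) < 1`, `H := ∇²f(x)`, `P` an `n×N` matrix
of full column rank, `H_r := Pᵀ H P`, `Q` the coarse truncated approximation
of `H_r` with parameter `p`, `λ̂ = (∇f(x)ᵀ P Q⁻¹ Pᵀ ∇f(x))^{1/2}`,
`d̂ = −P Q⁻¹ Pᵀ ∇f(x)` and `x⁺ := x + d̂` (unit step).  Then
`λ(x⁺) ≤ [√(λ(x)² − λ̂²) + λ(x)²] / (1 − λ(x))²`. -/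
theorem stmt17 {n N p : ℕ} (hp : 1 ≤ p) (hpN : p < N) (hNn : N < n)
    (f : (Fin n → ℝ) → ℝ) (grad : (Fin n → ℝ) → Fin n → ℝ)
    (hess : (Fin n → ℝ) → Matrix (Fin n) (Fin n) ℝ)
    (hf : ContDiff ℝ 3 f)
    (hconv : StrictConvexOn ℝ Set.univ f)
    (hgrad : ∀ x u : Fin n → ℝ, deriv (fun t : ℝ => f (x + t • u)) 0 = grad x ⬝ᵥ u)
    (hhessq : ∀ x u : Fin n → ℝ,
      iteratedDeriv 2 (fun t : ℝ => f (x + t • u)) 0 = u ⬝ᵥ (hess x *ᵥ u))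
    (hhsymm : ∀ x, (hess x).IsSymm)
    (hhpd : ∀ x, (hess x).PosDef)
    (hsc : ∀ x u : Fin n → ℝ, ∀ t : ℝ,
      |iteratedDeriv 3 (fun s : ℝ => f (x + s • u)) t|
        ≤ 2 * iteratedDeriv 2 (fun s : ℝ => f (x + s • u)) t ^ ((3 : ℝ) / 2))
    (hclosed : ∀ c : ℝ, IsClosed {x | f x ≤ c})
    (hbdd : BddBelow (Set.range f))
    (x : Fin n → ℝ)
    (P : Matrix (Fin n) (Fin N) ℝ) (hP : P.rank = N)
    (σ : Fin N → ℝ) (u : Fin N → Fin N → ℝ)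
    (hσpos : ∀ i, 0 < σ i)
    (hσmono : ∀ i j : Fin N, i ≤ j → σ j ≤ σ i)
    (hortho : ∀ i j : Fin N, u i ⬝ᵥ u j = if i = j then (1 : ℝ) else 0)
    (hHreig : ∀ i, (Pᵀ * hess x * P) *ᵥ u i = σ i • u i)
    (Q : Matrix (Fin N) (Fin N) ℝ) (hQsymm : Q.IsSymm)
    (hQeig : ∀ i : Fin N, Q *ᵥ u i = (if (i : ℕ) < p then σ i else σ ⟨p, hpN⟩) • u i)
    (lam : ℝ) (hlam : lam = Real.sqrt (grad x ⬝ᵥ ((hess x)⁻¹ *ᵥ grad x)))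
    (hlam1 : lam < 1)
    (lamhat : ℝ)
    (hlamhat : lamhat = Real.sqrt (grad x ⬝ᵥ (P *ᵥ (Q⁻¹ *ᵥ (Pᵀ *ᵥ grad x))))) :
    Real.sqrt (grad (x + -(P *ᵥ (Q⁻¹ *ᵥ (Pᵀ *ᵥ grad x)))) ⬝ᵥ
        ((hess (x + -(P *ᵥ (Q⁻¹ *ᵥ (Pᵀ *ᵥ grad x)))))⁻¹ *ᵥ
          grad (x + -(P *ᵥ (Q⁻¹ *ᵥ (Pᵀ *ᵥ grad x))))))
      ≤ (Real.sqrt (lam ^ 2 - lamhat ^ 2) + lam ^ 2) / (1 - lam) ^ 2 := by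
  have hPQ := posSemidef_sub_of_eigenvalues_le hortho hHreig hQeig (le_truncation hσmono hpN)
  have hQ := posDef_of_eigenvalues_pos hortho hQeig fun i =>
    (hσpos i).trans_le (le_truncation hσmono hpN i)
  exact stmt17_general f grad hess hf hgrad hhessq hhpd hsc x P Q hQ.isUnit hPQ lam hlam hlam1
    lamhat hlamhat _ rfl
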